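/- For every b ∈ {0,1}^N, the set of fixpoints {p ∈ [0,l] : p = F_b(p)} is nonempty and contains a minimal element and a maximal element with respect to the componentwise order. -/

import Mathlib

open Matrix

theorem kt_aux {L : Type*} [ConditionallyCompleteLattice L] (a c : L) (hac : a ≤ c) (f : L → L)
    (hf : ∀ x ∈ Set.Icc a c, f x ∈ Set.Icc a c)
    (hm : ∀ x ∈ Set.Icc a c, ∀ y ∈ Set.Icc a c, x ≤ y → f x ≤ f y) :
    ∃ p ∈ Set.Icc a c, p = f p ∧ ∀ q ∈ Set.Icc a c, q = f q → q ≤ p := by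
  let S : Set L := {x | x ∈ Set.Icc a c ∧ x ≤ f x}
  have haS : a ∈ S := ⟨⟨le_rfl, hac⟩, (hf a ⟨le_rfl, hac⟩).1⟩
  have hbdd : BddAbove S := ⟨c, fun x hx => hx.1.2⟩
  have hs : sSup S ∈ Set.Icc a c := ⟨le_csSup hbdd haS, csSup_le ⟨a, haS⟩ fun x hx => hx.1.2⟩
  have h1 : sSup S ≤ f (sSup S) := csSup_le ⟨a, haS⟩ fun x hx =>
    hx.2.trans (hm x hx.1 _ hs (le_csSup hbdd hx))
  have h2 : f (sSup S) ≤ sSup S := le_csSup hbdd ⟨hf _ hs, hm _ hs _ (hf _ hs) h1⟩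
  exact ⟨sSup S, hs, le_antisymm h1 h2, fun q hq hqf => le_csSup hbdd ⟨hq, hqf.le⟩⟩

theorem kt_aux_min {L : Type*} [ConditionallyCompleteLattice L] (a c : L) (hac : a ≤ c) (f : L → L)
    (hf : ∀ x ∈ Set.Icc a c, f x ∈ Set.Icc a c)
    (hm : ∀ x ∈ Set.Icc a c, ∀ y ∈ Set.Icc a c, x ≤ y → f x ≤ f y) :
    ∃ p ∈ Set.Icc a c, p = f p ∧ ∀ q ∈ Set.Icc a c, q = f q → p ≤ q := by
  let S : Set L := {x | x ∈ Set.Icc a c ∧ f x ≤ x}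
  have haS : c ∈ S := ⟨⟨hac, le_rfl⟩, (hf c ⟨hac, le_rfl⟩).2⟩
  have hbdd : BddBelow S := ⟨a, fun x hx => hx.1.1⟩
  have hs : sInf S ∈ Set.Icc a c := ⟨le_csInf ⟨c, haS⟩ fun x hx => hx.1.1, csInf_le hbdd haS⟩
  have h1 : f (sInf S) ≤ sInf S := le_csInf ⟨c, haS⟩ fun x hx =>
    (hm _ hs x hx.1 (csInf_le hbdd hx)).trans hx.2
  have h2 : sInf S ≤ f (sInf S) := csInf_le hbdd ⟨hf _ hs, hm _ (hf _ hs) _ hs h1⟩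
  exact ⟨sInf S, hs, le_antisymm h2 h1, fun q hq hqf => csInf_le hbdd ⟨hq, hqf.ge⟩⟩

theorem mulVec_mono_aux {N : ℕ} (A : Matrix (Fin N) (Fin N) ℝ) (hA : ∀ i j, 0 ≤ A i j)
    (u v : Fin N → ℝ) (huv : u ≤ v) (i : Fin N) :
    A.transpose.mulVec u i ≤ A.transpose.mulVec v i := by
  simp only [Matrix.mulVec, dotProduct, Matrix.transpose_apply]
  exact Finset.sum_le_sum fun j _ => mul_le_mul_of_nonneg_left (huv j) (hA j i)

theorem mulVec_nonneg_aux {N : ℕ} (A : Matrix (Fin N) (Fin N) ℝ) (hA : ∀ i j, 0 ≤ A i j)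
    (u : Fin N → ℝ) (hu : 0 ≤ u) (i : Fin N) : 0 ≤ A.transpose.mulVec u i := by
  simpa using mulVec_mono_aux A hA 0 u hu i

/-- For every `b ∈ {0,1}^N`, the set of fixpoints
`{p ∈ [0,l] : p = F_b(p)}` is nonempty and contains a minimal element and a maximal
element with respect to the componentwise order. -/
theorem stmt6 (N : ℕ) (hN : 1 < N)
    (e l : Fin N → ℝ) (he : 0 ≤ e) (hl : 0 ≤ l)
    (P Th : Matrix (Fin N) (Fin N) ℝ)
    (hP : ∀ i j, 0 ≤ P i j) (hProw : ∀ i, ∑ j, P i j = 1)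
    (hTh : ∀ i j, 0 ≤ Th i j) (hThrow : ∀ i, ∑ j, Th i j ≤ 1)
    (α β γ : ℝ) (hα : α ∈ Set.Icc (0:ℝ) 1) (hβ : β ∈ Set.Icc (0:ℝ) 1)
    (hγ : γ ∈ Set.Icc (0:ℝ) 1)
    (Gp : (Fin N → ℝ) → (Fin N → ℝ) → Fin N → ℝ)
    (hGp : Gp = fun u V i =>
      max (e i + P.transpose.mulVec u i + Th.transpose.mulVec V i - l i) 0 *
        (if u i = l i then (1 : ℝ) else 0))
    (H : (Fin N → ℝ) → Fin N → ℝ)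
    (hH : ∀ u ∈ Set.Icc (0 : Fin N → ℝ) l,
      H u = Gp u (H u) ∧ ∀ W : Fin N → ℝ, W = Gp u W → W = H u)
    (F : (Fin N → Bool) → (Fin N → ℝ) → Fin N → ℝ)
    (hF : F = fun b p i =>
      let V := H p
      let xi := e i + P.transpose.mulVec p i + Th.transpose.mulVec V i
      let yi := α * e i + β * P.transpose.mulVec p i + γ * Th.transpose.mulVec V i
      let di : ℝ := if xi < l i then 1 else 0
      if b i then yi * di + l i * (1 - di) else min yi (l i)) :
    ∀ b : Fin N → Bool,
      (∃ pmin : Fin N → ℝ, pmin ∈ Set.Icc (0 : Fin N → ℝ) l ∧ pmin = F b pmin ∧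
        ∀ q ∈ Set.Icc (0 : Fin N → ℝ) l, q = F b q → pmin ≤ q) ∧
      (∃ pmax : Fin N → ℝ, pmax ∈ Set.Icc (0 : Fin N → ℝ) l ∧ pmax = F b pmax ∧
        ∀ q ∈ Set.Icc (0 : Fin N → ℝ) l, q = F b q → q ≤ pmax) := by
  have hG0 : ∀ u V, 0 ≤ Gp u V := by
    intro u V i
    rw [hGp]
    dsimp only [Pi.zero_apply]
    exact mul_nonneg (le_max_right _ _) (by split_ifs <;> norm_num)
  have hGm : ∀ u v V W, u ≤ v → v ≤ l → V ≤ W → Gp u V ≤ Gp v W := by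
    intro u v V W huv hv hVW i
    rw [hGp]
    dsimp only
    have h1 := mulVec_mono_aux P hP u v huv i
    have h2 := mulVec_mono_aux Th hTh V W hVW i
    refine mul_le_mul (max_le_max (by linarith) le_rfl) ?_ (by split_ifs <;> norm_num)
      (le_max_right _ _)
    by_cases h : u i = l i
    · have : v i = l i := le_antisymm (hv i) (h ▸ huv i)
      simp [h, this]
    · rw [if_neg h]
      split_ifs <;> norm_num
  have hH0 : ∀ u ∈ Set.Icc (0 : Fin N → ℝ) l, 0 ≤ H u := by
    intro u hu
    rw [(hH u hu).1]
    exact hG0 _ _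
  have hHm : ∀ u ∈ Set.Icc (0 : Fin N → ℝ) l, ∀ v ∈ Set.Icc (0 : Fin N → ℝ) l, u ≤ v →
      H u ≤ H v := by
    intro u hu v hv huv
    obtain ⟨W, hW, hWf, -⟩ := kt_aux 0 (H v) (hH0 v hv) (Gp u)
      (fun x hx => ⟨hG0 _ _, by
        have := hGm u v x (H v) huv hv.2 hx.2
        rwa [← (hH v hv).1] at this⟩)
      (fun x _ y _ hxy => hGm u u x y le_rfl hu.2 hxy)
    rw [← (hH u hu).2 W hWf]
    exact hW.2
  intro b
  obtain ⟨hα0, hα1⟩ := hα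
  obtain ⟨hβ0, hβ1⟩ := hβ
  obtain ⟨hγ0, hγ1⟩ := hγ
  have hFI : ∀ p ∈ Set.Icc (0 : Fin N → ℝ) l, F b p ∈ Set.Icc (0 : Fin N → ℝ) l := by
    intro p hp
    have key : ∀ i, 0 ≤ F b p i ∧ F b p i ≤ l i := by
      intro i
      rw [hF]
      dsimp only
      have h1 := mulVec_nonneg_aux P hP p hp.1 i
      have h2 := mulVec_nonneg_aux Th hTh (H p) (hH0 p hp) i
      have h3 : 0 ≤ e i := he i
      have h4 : 0 ≤ l i := hl i
      have a1 := mul_nonneg hα0 h3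
      have a2 := mul_nonneg hβ0 h1
      have a3 := mul_nonneg hγ0 h2
      have b1 := mul_le_of_le_one_left h3 hα1
      have b2 := mul_le_of_le_one_left h1 hβ1
      have b3 := mul_le_of_le_one_left h2 hγ1
      split_ifs with hb hx
      · constructor <;> linarith
      · constructor <;> linarith
      · exact ⟨le_min (by linarith) h4, min_le_right _ _⟩
    exact ⟨fun i => (key i).1, fun i => (key i).2⟩
  have hFm : ∀ p ∈ Set.Icc (0 : Fin N → ℝ) l, ∀ q ∈ Set.Icc (0 : Fin N → ℝ) l, p ≤ q →
      F b p ≤ F b q := by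
    intro p hp q hq hpq i
    have hle := (hFI p hp).2 i
    rw [hF] at hle ⊢
    dsimp only at hle ⊢
    have h1 := mulVec_mono_aux P hP p q hpq i
    have h2 := mulVec_mono_aux Th hTh (H p) (H q) (hHm p hp q hq hpq) i
    have c1 := mul_le_mul_of_nonneg_left h1 hβ0
    have c2 := mul_le_mul_of_nonneg_left h2 hγ0
    by_cases hb : b i = true
    · simp only [hb, if_true] at hle ⊢
      by_cases hx : e i + P.transpose.mulVec q i + Th.transpose.mulVec (H q) i < l i
      · have hx' : e i + P.transpose.mulVec p i + Th.transpose.mulVec (H p) i < l i := by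
          linarith
        rw [if_pos hx, if_pos hx']
        linarith
      · rw [if_neg hx]
        linarith
    · simp only [hb]
      exact min_le_min (by linarith) le_rfl
  exact ⟨kt_aux_min 0 l hl (F b) hFI hFm, kt_aux 0 l hl (F b) hFI hFm⟩
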